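/- The closure of 𝒞 equals Pol(ℚ,<): (i) for every n ≥ 1, every function f : (Fin n → ℚ) → ℚ that preserves <, and every finite set A of tuples in Fin n → ℚ, there exists g ∈ 𝒞ₙ with g u = f u for all u ∈ A; (ii) conversely, if f : (Fin n → ℚ) → ℚ is such that for every finite set A of tuples some g ∈ 𝒞ₙ agrees with f on A, then f preserves <. -/

import Mathlib

/-!
Given `f` preserving `<` and finitely many tuples, all of whose entries are at most `a`, compress the
half-line above `a` into the interval `(a, a + 1)` by a strictly increasing map `squash a` that is the
identity up to `a`. Then `u ↦ f (squash a ∘ u)` still preserves `<`, agrees with `f` on the given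
tuples, and is bounded above by `f (a + 1, …, a + 1)`. Because of this bound it may be redefined on
the tuples lying entirely above `a` as a large translate of a coordinate, without destroying
preservation of `<`: a tuple above `a` is never dominated by one that is not, so only the comparison
of the bound with the translate matters. The converse only uses two-point sets.
-/

/-- `f` preserves `<` (is a polymorphism of `(ℚ, <)`). -/
def PreservesLt {n : ℕ} (f : (Fin n → ℚ) → ℚ) : Prop :=
  ∀ u v : Fin n → ℚ, (∀ j, u j < v j) → f u < f v

/-- `f` eventually acts as the order automorphism `α` at coordinate `i` above threshold `a`. -/
def EventuallyActsAs {n : ℕ} (f : (Fin n → ℚ) → ℚ) (α : ℚ ≃o ℚ) (i : Fin n) (a : ℚ) : Prop :=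
  ∀ u : Fin n → ℚ, (∀ j, a < u j) → f u = α (u i)

/-- The clone `𝒞`: `n`-ary functions preserving `<` that eventually act as some order
automorphism at some coordinate above some threshold. -/
def CloneC (n : ℕ) : Set ((Fin n → ℚ) → ℚ) :=
  {f | PreservesLt f ∧ ∃ (i : Fin n) (a : ℚ) (α : ℚ ≃o ℚ), EventuallyActsAs f α i a}

/-- The strictly increasing map of `ℚ` that is the identity up to `a` and maps `(a, ∞)` into
`(a, a + 1)`. -/
def squash (a x : ℚ) : ℚ := if x ≤ a then x else a + 1 - 1 / (1 + (x - a))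

lemma squash_of_le {a x : ℚ} (h : x ≤ a) : squash a x = x := if_pos h

lemma squash_lt (a x : ℚ) : squash a x < a + 1 := by
  unfold squash
  split_ifs with h
  · linarith
  · push Not at h
    have : 0 < 1 / (1 + (x - a)) := by apply one_div_pos.2; linarith
    linarith

lemma squash_strictMono (a : ℚ) : StrictMono (squash a) := by
  intro x y hxy
  unfold squash
  split_ifs with hx hy hy
  · exact hxy
  · push Not at hy
    have : 1 / (1 + (y - a)) < 1 := by
      rw [div_lt_one] <;> linarith
    linarith
  · linarith
  · push Not at hx
    have : 1 / (1 + (y - a)) < 1 / (1 + (x - a)) := by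
      apply one_div_lt_one_div_of_lt <;> linarith
    linarith

theorem closure_eq_pol :
    (∀ n : ℕ, 1 ≤ n → ∀ f : (Fin n → ℚ) → ℚ, PreservesLt f →
      ∀ A : Finset (Fin n → ℚ), ∃ g ∈ CloneC n, ∀ u ∈ A, g u = f u) ∧
    (∀ n : ℕ, 1 ≤ n → ∀ f : (Fin n → ℚ) → ℚ,
      (∀ A : Finset (Fin n → ℚ), ∃ g ∈ CloneC n, ∀ u ∈ A, g u = f u) →
      PreservesLt f) := by
  refine ⟨fun n hn f hf A ↦ ?_, fun n _ f hf u v huv ↦ ?_⟩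
  · obtain ⟨a, ha⟩ : ∃ a : ℚ, ∀ u ∈ A, ∀ j, u j ≤ a := by
      obtain ⟨b, hb⟩ := A.bddAbove
      obtain ⟨a, ha⟩ := (Set.finite_range b).bddAbove
      exact ⟨a, fun u hu j ↦ (hb hu j).trans (ha ⟨j, rfl⟩)⟩
    let i : Fin n := ⟨0, hn⟩
    -- The shift for which the translate at `a` equals the bound of `f (squash a ∘ ·)`.
    let c : ℚ := f (fun _ ↦ a + 1) - a
    classical
    refine ⟨fun u ↦ if ∀ j, a < u j then u i + c else f (fun j ↦ squash a (u j)),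
      ⟨fun u v huv ↦ ?_, i, a, OrderIso.addRight c, fun u hu ↦ ?_⟩, fun u hu ↦ ?_⟩
    · by_cases hu : ∀ j, a < u j
      · have hv : ∀ j, a < v j := fun j ↦ (hu j).trans (huv j)
        simp only [if_pos hu, if_pos hv]
        linarith [huv i]
      · by_cases hv : ∀ j, a < v j
        · simp only [if_neg hu, if_pos hv]
          have := hf (fun j ↦ squash a (u j)) (fun _ ↦ a + 1) fun j ↦ squash_lt a (u j)
          have := hv i
          simp only [c]
          linarith
        · simp only [if_neg hu, if_neg hv]
          exact hf _ _ fun j ↦ squash_strictMono a (huv j)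
    · simp only [if_pos hu, OrderIso.addRight_apply]
    · have hu' : ¬ ∀ j, a < u j := fun h ↦ (ha u hu i).not_gt (h i)
      simp only [if_neg hu', squash_of_le (ha u hu _)]
  · obtain ⟨g, hg, hgf⟩ := hf {u, v}
    rw [← hgf u (by simp), ← hgf v (by simp)]
    exact hg.1 u v huv
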